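/- Let u be S-subharmonic on X and let f : X → ℝ be continuous with u(x) < f(x) for every x ∈ X. Then there exists a function v ∈ S such that u(x) < v(x) ≤ f(x) for every x ∈ X. -/

import Mathlib

/-!
The heart of the proof is Edwards' duality. For a convex cone `K` of continuous functions containing
the constants, the envelope `E g = sup {v z | v ∈ K, v ≤ g}` is superlinear in `g`, so by
Hahn-Banach some linear functional `L` satisfies `E ≤ L` with equality at a prescribed `g`. Such an
`L` is positive and normalised, hence is integration against a probability measure, and
`v z ≤ E v ≤ L v` for `v ∈ K` says that this measure is Jensen at `z`. Thus the envelope of a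
continuous `g` is attained as the integral of `g` against a Jensen measure, and an `S`-subharmonic
function lying below `g` lies below the envelope of `g`.

Compactness enters twice, both times as Dini's argument for directed families of lower
semicontinuous functions: it makes the gap between `u` and `f` uniform, and it replaces the
minorants of `f` in `K` that exceed `u` at one point by a single one that exceeds `u` everywhere.
-/

open MeasureTheory Topology Filter
open scoped ENNReal

/-- The nonnegative part of an extended real number, as an element of `ℝ≥0∞`. -/
noncomputable def erealToENNReal (a : EReal) : ℝ≥0∞ :=
  if a = ⊤ then ⊤ else ENNReal.ofReal a.toReal

/-- The (upper) integral of a function with values in `[-∞, ∞]`, defined as the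
difference of the lower integrals of its positive and negative parts. -/
noncomputable def erealIntegral {α : Type*} [MeasurableSpace α]
    (μ : Measure α) (u : α → EReal) : EReal :=
  ((∫⁻ x, erealToENNReal (u x) ∂μ : ℝ≥0∞) : EReal) -
    ((∫⁻ x, erealToENNReal (-(u x)) ∂μ : ℝ≥0∞) : EReal)

/-- `μ` is a Jensen measure with barycenter `z` with respect to the family `S` of
(continuous real-valued) functions: a Borel probability measure such that
`u z ≤ ∫ u dμ` for every `u ∈ S`. -/
def IsJensenMeasure {α : Type*} [MeasurableSpace α]
    (S : Set (α → ℝ)) (z : α) (μ : Measure α) : Prop :=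
  IsProbabilityMeasure μ ∧ ∀ u ∈ S, u z ≤ ∫ x, u x ∂μ

/-- A function `u : α → [-∞, ∞)` is `S`-subharmonic if it is upper semicontinuous
and satisfies `u z ≤ ∫ u dμ` for every `z` and every Jensen measure `μ` with
barycenter `z` w.r.t. `S`. -/
def IsSSubharmonic {α : Type*} [TopologicalSpace α] [MeasurableSpace α]
    (S : Set (α → ℝ)) (u : α → EReal) : Prop :=
  UpperSemicontinuous u ∧ (∀ x, u x ≠ ⊤) ∧
    ∀ z : α, ∀ μ : Measure α, IsJensenMeasure S z μ → u z ≤ erealIntegral μ u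

section Semicontinuity

variable {α : Type*} [TopologicalSpace α]

lemma isOpen_setOf_lt_of_semicontinuous {γ : Type*} [LinearOrder γ] {u v : α → γ}
    (hu : UpperSemicontinuous u) (hv : LowerSemicontinuous v) : IsOpen {x | u x < v x} := by
  refine isOpen_iff_mem_nhds.2 fun z hz => ?_
  obtain ⟨a, hua, b, hbv, hab⟩ := LT.lt.exists_disjoint_Iio_Ioi hz
  filter_upwards [hu z a hua, hv z b hbv] with x hux hvx using hab _ hux _ hvx

variable [CompactSpace α]

lemma exists_forall_lt_of_directed {γ ι : Type*} [LinearOrder γ] [Nonempty ι] {u : α → γ}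
    {v : ι → α → γ} (hu : UpperSemicontinuous u) (hv : ∀ i, LowerSemicontinuous (v i))
    (hdir : Directed (· ≤ ·) v) (huv : ∀ x, ∃ i, u x < v i x) : ∃ i, ∀ x, u x < v i x := by
  have hdir_sets : Directed (· ⊆ ·) fun i => {x | u x < v i x} :=
    hdir.mono_comp (rb := (· ⊆ ·)) (g := fun w : α → γ => {x | u x < w x}) _
      fun w₁ w₂ hw x hx => lt_of_lt_of_le hx (hw x)
  obtain ⟨i, hi⟩ := isCompact_univ.elim_directed_cover (fun i => {x | u x < v i x})
    (fun i => isOpen_setOf_lt_of_semicontinuous hu (hv i))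
    (fun x _ => Set.mem_iUnion.2 (huv x)) hdir_sets
  exact ⟨i, fun x => hi (Set.mem_univ x)⟩

lemma exists_pos_forall_lt_sub {u : α → EReal} {f : α → ℝ} (hu : UpperSemicontinuous u)
    (hf : Continuous f) (huf : ∀ x, u x < f x) : ∃ ε : ℝ, 0 < ε ∧ ∀ x, u x < (f x - ε : ℝ) := by
  have hdir : Directed (· ≤ ·) fun (ε : Set.Ioi (0 : ℝ)) x => ((f x - ε : ℝ) : EReal) :=
    directed_of_isDirected_ge fun ε δ hεδ x =>
      EReal.coe_le_coe_iff.2 (sub_le_sub_left (Subtype.coe_le_coe.2 hεδ) (f x))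
  have hpoint : ∀ x, ∃ ε : Set.Ioi (0 : ℝ), u x < (f x - ε : ℝ) := fun x => by
    obtain ⟨c, huc, hcf⟩ := EReal.lt_iff_exists_real_btwn.1 (huf x)
    exact ⟨⟨f x - c, sub_pos.2 (EReal.coe_lt_coe_iff.1 hcf)⟩, by rwa [sub_sub_cancel]⟩
  obtain ⟨ε, hε⟩ := exists_forall_lt_of_directed hu
    (fun ε : Set.Ioi (0 : ℝ) => (continuous_coe_real_ereal.comp
      (hf.sub continuous_const)).lowerSemicontinuous) hdir hpoint
  exact ⟨ε, ε.2, hε⟩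

lemma exists_mem_forall_lt_of_supClosed {S : Set (α → ℝ)} {u : α → EReal}
    (hu : UpperSemicontinuous u) (hcont : ∀ v ∈ S, Continuous v) (hsup : SupClosed S)
    (hne : S.Nonempty) (huS : ∀ x, ∃ v ∈ S, u x < v x) : ∃ v ∈ S, ∀ x, u x < v x := by
  have := hne.to_subtype
  have hdir : Directed (· ≤ ·) fun (v : S) x => (v.1 x : EReal) :=
    hsup.directedOn.directed_val.mono_comp (rb := (· ≤ ·))
      (g := fun (w : α → ℝ) x => (w x : EReal)) _ fun w₁ w₂ hw x => EReal.coe_le_coe_iff.2 (hw x)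
  obtain ⟨v, hv⟩ := exists_forall_lt_of_directed hu
    (fun v : S => (continuous_coe_real_ereal.comp (hcont v v.2)).lowerSemicontinuous) hdir
    fun x => let ⟨v, hv, huv⟩ := huS x; ⟨⟨v, hv⟩, huv⟩
  exact ⟨v, v.2, hv⟩

end Semicontinuity

section ExtendedIntegral

lemma erealToENNReal_mono : Monotone erealToENNReal :=
  fun _ _ => EReal.toENNReal_le_toENNReal

lemma erealToENNReal_coe (r : ℝ) : erealToENNReal r = ENNReal.ofReal r :=
  EReal.real_coe_toENNReal r

variable {α : Type*} [MeasurableSpace α] {μ : Measure α}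

lemma erealIntegral_mono {u v : α → EReal} (huv : u ≤ v) :
    erealIntegral μ u ≤ erealIntegral μ v :=
  EReal.sub_le_sub
    (EReal.coe_ennreal_le_coe_ennreal_iff.2 <| lintegral_mono fun x =>
      erealToENNReal_mono (huv x))
    (EReal.coe_ennreal_le_coe_ennreal_iff.2 <| lintegral_mono fun x =>
      erealToENNReal_mono (EReal.neg_le_neg_iff.2 (huv x)))

lemma erealIntegral_coe {g : α → ℝ} (hg : Integrable g μ) :
    erealIntegral μ (fun x => (g x : EReal)) = (∫ x, g x ∂μ : ℝ) := by
  have hpos : ∫⁻ x, ENNReal.ofReal (g x) ∂μ ≠ ⊤ := hg.lintegral_lt_top.ne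
  have hneg : ∫⁻ x, ENNReal.ofReal (-g x) ∂μ ≠ ⊤ := hg.neg.lintegral_lt_top.ne
  rw [integral_eq_lintegral_pos_part_sub_lintegral_neg_part hg, EReal.coe_sub,
    EReal.coe_ennreal_toReal hpos, EReal.coe_ennreal_toReal hneg]
  simp only [erealIntegral, ← EReal.coe_neg, erealToENNReal_coe]

end ExtendedIntegral

section HahnBanach

variable {E : Type*} [AddCommGroup E] [Module ℝ E] {p : E → ℝ}

lemma sublinear_zero (hsmul : ∀ c : ℝ, 0 < c → ∀ x, p (c • x) = c * p x) : p 0 = 0 := by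
  have := hsmul 2 two_pos 0
  rw [smul_zero] at this
  linarith

lemma mul_le_sublinear_smul (hsmul : ∀ c : ℝ, 0 < c → ∀ x, p (c • x) = c * p x)
    (hadd : ∀ x y, p (x + y) ≤ p x + p y) (c : ℝ) (x : E) : c * p x ≤ p (c • x) := by
  rcases lt_trichotomy c 0 with hc | rfl | hc
  · have hsum := hadd (c • x) ((-c) • x)
    rw [← add_smul, add_neg_cancel, zero_smul, sublinear_zero hsmul,
      hsmul (-c) (neg_pos.2 hc)] at hsum
    linarith
  · rw [zero_mul, zero_smul, sublinear_zero hsmul]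
  · exact (hsmul c hc x).ge

lemma exists_linearMap_le_sublinear_eq (hsmul : ∀ c : ℝ, 0 < c → ∀ x, p (c • x) = c * p x)
    (hadd : ∀ x y, p (x + y) ≤ p x + p y) (x₀ : E) :
    ∃ L : E →ₗ[ℝ] ℝ, (∀ x, L x ≤ p x) ∧ L x₀ = p x₀ := by
  have mul_eq_zero_of_smul (c : ℝ) (hc : c • x₀ = 0) : c * p x₀ = 0 := by
    have hle := mul_le_sublinear_smul hsmul hadd c x₀
    have hge := mul_le_sublinear_smul hsmul hadd (-c) x₀
    rw [neg_smul, hc, neg_zero, sublinear_zero hsmul] at hge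
    rw [hc, sublinear_zero hsmul] at hle
    linarith
  obtain ⟨L, hL_eq, hL_le⟩ := exists_extension_of_le_sublinear
    (LinearPMap.mkSpanSingleton' x₀ (p x₀) mul_eq_zero_of_smul) p hsmul hadd <| by
      rintro ⟨x, hx⟩
      obtain ⟨c, rfl⟩ := Submodule.mem_span_singleton.1 hx
      rw [LinearPMap.mkSpanSingleton'_apply]
      exact mul_le_sublinear_smul hsmul hadd c x₀
  exact ⟨L, hL_le, (hL_eq ⟨x₀, Submodule.mem_span_singleton_self x₀⟩).trans
    (LinearPMap.mkSpanSingleton'_apply_self ..)⟩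

end HahnBanach

section EdwardsEnvelope

open scoped Pointwise

/-- The lower envelope of `g` with respect to `S`: at `z`, the supremum of `v z` over the `v ∈ S`
lying below `g`. By Edwards' theorem it equals, for suitable `S` and continuous `g`, the infimum of
`∫ g dμ` over the Jensen measures `μ` with barycenter `z`. The real supremum takes
the junk value `0` if `g` has no minorant in `S`. -/
noncomputable def edwardsEnvelope {α : Type*} (S : Set (α → ℝ)) (g : α → ℝ) (z : α) : ℝ :=
  sSup (Function.eval z '' (S ∩ Set.Iic g))

variable {α : Type*} {S : Set (α → ℝ)} {K : ConvexCone ℝ (α → ℝ)} {g : α → ℝ} {z : α}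

lemma bddAbove_eval_image_inter_Iic : BddAbove (Function.eval z '' (S ∩ Set.Iic g)) :=
  ⟨g z, Set.forall_mem_image.2 fun _ hv => hv.2 z⟩

lemma le_edwardsEnvelope {v : α → ℝ} (hv : v ∈ S) (hvg : v ≤ g) : v z ≤ edwardsEnvelope S g z :=
  le_csSup bddAbove_eval_image_inter_Iic (Set.mem_image_of_mem _ ⟨hv, hvg⟩)

lemma exists_mem_of_lt_edwardsEnvelope (hg : (S ∩ Set.Iic g).Nonempty) {r : ℝ}
    (hr : r < edwardsEnvelope S g z) : ∃ v ∈ S, v ≤ g ∧ r < v z := by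
  obtain ⟨_, ⟨v, ⟨hv, hvg⟩, rfl⟩, hrv⟩ := exists_lt_of_lt_csSup (hg.image _) hr
  exact ⟨v, hv, hvg, hrv⟩

lemma edwardsEnvelope_add_le {h : α → ℝ} (hg : ((K : Set (α → ℝ)) ∩ Set.Iic g).Nonempty)
    (hh : ((K : Set (α → ℝ)) ∩ Set.Iic h).Nonempty) (z : α) :
    edwardsEnvelope K g z + edwardsEnvelope K h z ≤ edwardsEnvelope K (g + h) z := by
  unfold edwardsEnvelope
  rw [← csSup_add (hg.image _) bddAbove_eval_image_inter_Iic (hh.image _)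
    bddAbove_eval_image_inter_Iic]
  refine csSup_le_csSup bddAbove_eval_image_inter_Iic ((hg.image _).add (hh.image _)) ?_
  rintro _ ⟨_, ⟨v, ⟨hv, hvg⟩, rfl⟩, _, ⟨w, ⟨hw, hwh⟩, rfl⟩, rfl⟩
  exact ⟨v + w, ⟨K.add_mem hv hw, Set.mem_Iic.2 (add_le_add hvg hwh)⟩, rfl⟩

lemma edwardsEnvelope_smul {c : ℝ} (hc : 0 < c) (g : α → ℝ) (z : α) :
    edwardsEnvelope K (c • g) z = c * edwardsEnvelope K g z := by
  have minorants_smul :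
      (K : Set (α → ℝ)) ∩ Set.Iic (c • g) = c • ((K : Set (α → ℝ)) ∩ Set.Iic g) := by
    ext v
    rw [Set.mem_smul_set_iff_inv_smul_mem₀ hc.ne', Set.mem_inter_iff, Set.mem_inter_iff,
      Set.mem_Iic, Set.mem_Iic, inv_smul_le_iff_of_pos hc]
    exact and_congr_left fun _ => (K.smul_mem_iff (inv_pos.2 hc)).symm
  rw [edwardsEnvelope, minorants_smul, ← smul_eq_mul, edwardsEnvelope,
    ← Real.sSup_smul_of_nonneg hc.le]
  exact congrArg sSup (Set.image_smul_comm _ _ _ fun _ => rfl)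

end EdwardsEnvelope

section Duality

variable {α : Type*} [TopologicalSpace α] [CompactSpace α]

lemma exists_const_mem_inter_Iic {S : Set (α → ℝ)} (hconst : ∀ c, Function.const α c ∈ S)
    {g : α → ℝ} (hg : Continuous g) : (S ∩ Set.Iic g).Nonempty := by
  obtain ⟨c, hc⟩ := (isCompact_range hg).bddBelow
  exact ⟨_, hconst c, fun x => hc (Set.mem_range_self x)⟩

lemma exists_linearMap_ge_edwardsEnvelope_eq {K : ConvexCone ℝ (α → ℝ)}
    (hconst : ∀ c, Function.const α c ∈ K) (f : C(α, ℝ)) (z : α) :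
    ∃ L : C(α, ℝ) →ₗ[ℝ] ℝ, (∀ g : C(α, ℝ), edwardsEnvelope K g z ≤ L g) ∧
      L f = edwardsEnvelope K f z := by
  obtain ⟨L, hL_le, hL_eq⟩ := exists_linearMap_le_sublinear_eq
    (p := fun g : C(α, ℝ) => -edwardsEnvelope K g z)
    (fun c hc g => by rw [ContinuousMap.coe_smul, edwardsEnvelope_smul hc, mul_neg])
    (fun g h => by
      rw [← neg_add, neg_le_neg_iff]
      exact edwardsEnvelope_add_le (exists_const_mem_inter_Iic hconst g.continuous)
        (exists_const_mem_inter_Iic hconst h.continuous) z) f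
  exact ⟨-L, fun g => le_neg_of_le_neg (hL_le g), neg_eq_iff_eq_neg.2 hL_eq⟩

variable [T2Space α] [MeasurableSpace α] [BorelSpace α]

lemma exists_isProbabilityMeasure_integral_eq (L : C(α, ℝ) →ₚ[ℝ] ℝ) (hL : L 1 = 1) :
    ∃ μ : Measure α, IsProbabilityMeasure μ ∧ ∀ g : C(α, ℝ), ∫ x, g x ∂μ = L g := by
  let Λ : CompactlySupportedContinuousMap α ℝ →ₚ[ℝ] ℝ :=
    { toFun := fun g => L g.toContinuousMap
      map_add' := fun g h => map_add L g.toContinuousMap h.toContinuousMap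
      map_smul' := fun c g => map_smul L c g.toContinuousMap
      monotone' := fun _ _ hgh => L.monotone' hgh }
  have hΛ (g : C(α, ℝ)) : ∫ x, g x ∂(RealRMK.rieszMeasure Λ) = L g :=
    RealRMK.integral_rieszMeasure Λ (CompactlySupportedContinuousMap.continuousMapEquiv g)
  refine ⟨RealRMK.rieszMeasure Λ, ⟨?_⟩, hΛ⟩
  have hone := (hΛ 1).trans hL
  simp only [ContinuousMap.one_apply, integral_const, smul_eq_mul, mul_one] at hone
  exact (ENNReal.toReal_eq_one_iff _).1 hone

variable {K : ConvexCone ℝ (α → ℝ)}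

lemma exists_isJensenMeasure_integral_eq_edwardsEnvelope (hcont : ∀ v ∈ K, Continuous v)
    (hconst : ∀ c, Function.const α c ∈ K) (f : C(α, ℝ)) (z : α) :
    ∃ μ : Measure α, IsJensenMeasure K z μ ∧ ∫ x, f x ∂μ = edwardsEnvelope K f z := by
  obtain ⟨L, hEL, hLf⟩ := exists_linearMap_ge_edwardsEnvelope_eq hconst f z
  have le_map {v : α → ℝ} (hv : v ∈ K) {g : C(α, ℝ)} (hvg : v ≤ g) : v z ≤ L g :=
    (le_edwardsEnvelope hv hvg).trans (hEL g)
  have map_one : L 1 = 1 := by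
    refine le_antisymm ?_ (le_map (hconst 1) le_rfl)
    have := le_map (hconst (-1)) (g := -1) le_rfl
    rw [map_neg] at this
    exact le_of_neg_le_neg this
  obtain ⟨μ, hμ, hμL⟩ := exists_isProbabilityMeasure_integral_eq
    (PositiveLinearMap.mk₀ L fun g hg => le_map (hconst 0) hg) map_one
  exact ⟨μ, ⟨hμ, fun v hv => (le_map hv (g := ⟨v, hcont v hv⟩) le_rfl).trans_eq (hμL _).symm⟩,
    (hμL f).trans hLf⟩

variable {u : α → EReal}

lemma IsSSubharmonic.le_edwardsEnvelope (hu : IsSSubharmonic (K : Set (α → ℝ)) u)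
    (hcont : ∀ v ∈ K, Continuous v) (hconst : ∀ c, Function.const α c ∈ K) {g : α → ℝ}
    (hg : Continuous g) (hug : ∀ x, u x ≤ g x) (z : α) : u z ≤ edwardsEnvelope K g z := by
  obtain ⟨μ, hμ, hμg⟩ :=
    exists_isJensenMeasure_integral_eq_edwardsEnvelope hcont hconst ⟨g, hg⟩ z
  have := hμ.1
  have hg_int : Integrable g μ :=
    hg.integrable_of_hasCompactSupport (HasCompactSupport.of_compactSpace g)
  calc u z ≤ erealIntegral μ u := hu.2.2 z μ hμ
    _ ≤ erealIntegral μ (fun x => (g x : EReal)) := erealIntegral_mono hug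
    _ = (∫ x, g x ∂μ : ℝ) := erealIntegral_coe hg_int
    _ = edwardsEnvelope K g z := congrArg _ hμg

lemma IsSSubharmonic.exists_mem_le_lt (hu : IsSSubharmonic (K : Set (α → ℝ)) u)
    (hcont : ∀ v ∈ K, Continuous v) (hconst : ∀ c, Function.const α c ∈ K) {f : α → ℝ}
    (hf : Continuous f) (huf : ∀ x, u x < f x) (z : α) : ∃ v ∈ K, v ≤ f ∧ u z < v z := by
  obtain ⟨ε, hε, hufε⟩ := exists_pos_forall_lt_sub hu.1 hf huf
  have hfε : Continuous (f - Function.const α ε) := hf.sub continuous_const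
  obtain ⟨v, hv, hvf, hvz⟩ := exists_mem_of_lt_edwardsEnvelope (z := z)
    (exists_const_mem_inter_Iic hconst hfε) (sub_lt_self _ hε)
  refine ⟨v + Function.const α ε, K.add_mem hv (hconst ε), le_sub_iff_add_le.1 hvf, ?_⟩
  calc u z ≤ edwardsEnvelope K (f - Function.const α ε) z :=
        hu.le_edwardsEnvelope hcont hconst hfε (fun x => (hufε x).le) z
    _ < (v z + ε : ℝ) := EReal.coe_lt_coe_iff.2 (sub_lt_iff_lt_add.1 hvz)

theorem exists_mem_between_of_lt_continuous_general (hcont : ∀ v ∈ K, Continuous v)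
    (hconst : ∀ c, Function.const α c ∈ K) (hsup : SupClosed (K : Set (α → ℝ)))
    (hu : IsSSubharmonic (K : Set (α → ℝ)) u) {f : α → ℝ} (hf : Continuous f)
    (huf : ∀ x, u x < f x) : ∃ v ∈ K, ∀ x, u x < v x ∧ v x ≤ f x := by
  obtain ⟨v, ⟨hv, hvf⟩, huv⟩ := exists_mem_forall_lt_of_supClosed (S := K ∩ Set.Iic f) hu.1
    (fun v hv => hcont v hv.1) (hsup.inter fun _ hv _ hw => Set.mem_Iic.2 (sup_le hv hw))
    (exists_const_mem_inter_Iic hconst hf) fun z => by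
      obtain ⟨v, hv, hvf, huv⟩ := hu.exists_mem_le_lt hcont hconst hf huf z
      exact ⟨v, ⟨hv, hvf⟩, huv⟩
  exact ⟨v, hv, fun x => ⟨huv x, hvf x⟩⟩

end Duality

/-- If `u` is `S`-subharmonic on `X` and `f : X → ℝ` is continuous with `u < f`
everywhere, then there is `v ∈ S` with `u < v ≤ f` on `X`. -/
theorem exists_mem_between_of_lt_continuous {n : ℕ}
    (X : Set (Fin n → ℂ)) (hX : IsCompact X)
    (S : Set (↥X → ℝ)) (hS : ∀ f ∈ S, Continuous f)
    (hconst : ∀ c : ℝ, (fun _ => c) ∈ S)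
    (hadd : ∀ u ∈ S, ∀ v ∈ S, u + v ∈ S)
    (hsmul : ∀ u ∈ S, ∀ t : ℝ, 0 ≤ t → t • u ∈ S)
    (hmax : ∀ u ∈ S, ∀ v ∈ S, (fun x => max (u x) (v x)) ∈ S)
    (u : ↥X → EReal) (hu : IsSSubharmonic S u)
    (f : ↥X → ℝ) (hf : Continuous f) (huf : ∀ x, u x < ((f x : ℝ) : EReal)) :
    ∃ v ∈ S, ∀ x, u x < ((v x : ℝ) : EReal) ∧ v x ≤ f x := by
  have : CompactSpace X := isCompact_iff_compactSpace.1 hX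
  exact exists_mem_between_of_lt_continuous_general
    (K := ⟨S, fun c hc v hv => hsmul v hv c hc.le, fun v hv w hw => hadd v hv w hw⟩)
    hS hconst hmax hu hf huf
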